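/- arXiv:1808.02759 — 9 statements merged into one kernel-verified Lean document; each statement's English description precedes it below -/
import Mathlib

section
/- Let L be an n×n real matrix, α ∈ ℝ, H > 0, v_0, u_0, …, u_K ∈ ℝ^n, and let v : ℝ → ℝ^n satisfy v(0) = v_0 and, for every t ∈ [0,H], v'(t) = α·L·v(t) + Σ_{k=0}^{K} (t/H)^k u_k. Then v(H) = exp(αH·L)·v_0 + H·Σ_{k=0}^{K} φ_{k+1}(αH·L)·u_k. -/
/- The elementwise sup norm on matrices, made available locally so that the
matrix-valued integrals below make sense. -/
attribute [local instance] Matrix.normedAddCommGroup Matrix.normedSpace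

/-- `φ_{k+1}(M) = ∫_0^1 exp((1−t)M) t^k dt` (matrix-valued integral). -/
noncomputable def phiMat {n : ℕ} (k : ℕ) (M : Matrix (Fin n) (Fin n) ℝ) :
    Matrix (Fin n) (Fin n) ℝ :=
  ∫ t in (0:ℝ)..1, t ^ k • NormedSpace.exp ((1 - t) • M)

/-!
Multiplying `v' = A v + f` by the integrating factor `exp ((b - t) A)` gives
`(exp ((b - t) A) v)' = exp ((b - t) A) f`, whose integral is the variation-of-constants formula.
For `f t = ∑ (t / H) ^ k u_k` the substitution `t = H s` turns each summand of the integral into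
`H φ_{k+1}(H A) u_k`. This works for a bounded operator on a Banach space; matrices are covered
because `M ↦ M.mulVec` is a linear homeomorphism of algebras, hence commutes with `exp` and with
integrals, whichever norm the matrices carry.
-/

open NormedSpace Set intervalIntegral
open MeasureTheory (volume)

section BanachAlgebra

variable {𝔸 : Type*} [NormedRing 𝔸] [NormedAlgebra ℝ 𝔸]

/-- The function `φ_{k+1}` of exponential integrators on a real Banach algebra. The index `k` is
the exponent in the integrand, as in `phiMat`. -/
noncomputable def expPhi (k : ℕ) (a : 𝔸) : 𝔸 :=
  ∫ t in (0 : ℝ)..1, t ^ k • exp ((1 - t) • a)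

theorem hasDerivAt_exp_sub_smul [CompleteSpace 𝔸] (a : 𝔸) (b t : ℝ) :
    HasDerivAt (fun s : ℝ ↦ exp ((b - s) • a)) (-(exp ((b - t) • a) * a)) t := by
  simpa [Function.comp_def] using
    (hasDerivAt_exp_smul_const a (b - t)).scomp t ((hasDerivAt_id t).const_sub b)

theorem continuous_exp_sub_smul [CompleteSpace 𝔸] (a : 𝔸) (b : ℝ) :
    Continuous fun s : ℝ ↦ exp ((b - s) • a) :=
  continuous_iff_continuousAt.2 fun t ↦ (hasDerivAt_exp_sub_smul a b t).continuousAt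

end BanachAlgebra

section VariationOfConstants

variable {E : Type*} [NormedAddCommGroup E] [NormedSpace ℝ E] [CompleteSpace E]

theorem hasDerivWithinAt_exp_sub_smul_apply {A : E →L[ℝ] E} {v : ℝ → E} {y : E} {s : Set ℝ}
    {t : ℝ} (b : ℝ) (hv : HasDerivWithinAt v (A (v t) + y) s t) :
    HasDerivWithinAt (fun r ↦ exp ((b - r) • A) (v r)) (exp ((b - t) • A) y) s t := by
  refine ((hasDerivAt_exp_sub_smul A b t).hasDerivWithinAt.clm_apply hv).congr_deriv ?_
  simp

theorem variation_of_constants {A : E →L[ℝ] E} {v f : ℝ → E} {a b : ℝ}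
    (hf : IntervalIntegrable f volume a b)
    (hv : ∀ t ∈ uIcc a b, HasDerivWithinAt v (A (v t) + f t) (uIcc a b) t) :
    v b = exp ((b - a) • A) (v a) + ∫ t in a..b, exp ((b - t) • A) (f t) := by
  have hderiv t (ht : t ∈ uIcc a b) := hasDerivWithinAt_exp_sub_smul_apply b (hv t ht)
  have : IsBoundedSMul (E →L[ℝ] E) E := .of_norm_smul_le fun B x ↦ B.le_opNorm x
  have hint : IntervalIntegrable (fun t ↦ exp ((b - t) • A) (f t)) volume a b :=
    hf.continuousOn_smul (continuous_exp_sub_smul A b).continuousOn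
  have hFTC := integral_eq_sub_of_hasDeriv_right (fun t ht ↦ (hderiv t ht).continuousWithinAt)
    (fun t ht ↦ ((hderiv t (Ioo_subset_Icc_self ht)).hasDerivAt
      (Icc_mem_nhds ht.1 ht.2)).hasDerivWithinAt) hint
  simp [hFTC]

theorem smul_expPhi_apply (k : ℕ) (A : E →L[ℝ] E) {H : ℝ} (hH : H ≠ 0) (x : E) :
    H • expPhi k (H • A) x = ∫ t in (0 : ℝ)..H, exp ((H - t) • A) ((t / H) ^ k • x) := by
  have hint : IntervalIntegrable (fun s : ℝ ↦ s ^ k • exp ((1 - s) • H • A)) volume 0 1 :=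
    ((continuous_pow k).smul (continuous_exp_sub_smul (H • A) 1)).intervalIntegrable 0 1
  calc H • expPhi k (H • A) x
      = H • ∫ s in (0 : ℝ)..1, (s ^ k • exp ((1 - s) • H • A)) x := by
        rw [expPhi, ContinuousLinearMap.intervalIntegral_apply hint]
    _ = H • ∫ s in (0 : ℝ)..1, exp ((H - H * s) • A) ((H * s / H) ^ k • x) := by
        congr! 3 with s
        rw [mul_div_cancel_left₀ s hH, map_smul, smul_smul, sub_mul, one_mul, mul_comm s H,
          smul_apply]
    _ = ∫ t in (0 : ℝ)..H, exp ((H - t) • A) ((t / H) ^ k • x) := by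
        rw [smul_integral_comp_mul_left (fun t ↦ exp ((H - t) • A) ((t / H) ^ k • x)), mul_zero,
          mul_one]

theorem stmt2_general {K : ℕ} (A : E →L[ℝ] E) {H : ℝ} (hH : H ≠ 0) (u : Fin (K + 1) → E)
    {v : ℝ → E}
    (hv : ∀ t ∈ uIcc 0 H, HasDerivWithinAt v
      (A (v t) + ∑ k : Fin (K + 1), (t / H) ^ (k : ℕ) • u k) (uIcc 0 H) t) :
    v H = exp (H • A) (v 0) + H • ∑ k : Fin (K + 1), expPhi (k : ℕ) (H • A) (u k) := by
  have hf : Continuous fun t : ℝ ↦ ∑ k : Fin (K + 1), (t / H) ^ (k : ℕ) • u k := by fun_prop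
  have hsummand (k : Fin (K + 1)) : IntervalIntegrable
      (fun t ↦ exp ((H - t) • A) ((t / H) ^ (k : ℕ) • u k)) volume 0 H :=
    ((continuous_exp_sub_smul A H).clm_apply (by fun_prop)).intervalIntegrable 0 H
  rw [variation_of_constants (hf.intervalIntegrable 0 H) hv, sub_zero]
  simp only [map_sum, integral_finsetSum fun k _ ↦ hsummand k, Finset.smul_sum,
    smul_expPhi_apply _ A hH]

end VariationOfConstants

section Matrix

theorem continuousAlgEquiv_map_exp {𝕜 A B : Type*} [Field 𝕜] [CharZero 𝕜]
    [Ring A] [Algebra 𝕜 A] [TopologicalSpace A] [IsTopologicalRing A] [T2Space A]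
    [Ring B] [Algebra 𝕜 B] [TopologicalSpace B] [IsTopologicalRing B] [T2Space B]
    (e : A ≃A[𝕜] B) (a : A) : e (exp a) = exp (e a) := by
  simp only [exp_eq_tsum 𝕜, ← e.toContinuousLinearEquiv_apply, e.toContinuousLinearEquiv.map_tsum]
  simp only [e.toContinuousLinearEquiv_apply, map_smul, map_pow]

/-- The action of square matrices on column vectors, as an isomorphism of topological algebras onto
the bounded operators; it transports the operator-theoretic formulas to matrices. -/
noncomputable def mulVecContinuousAlgEquiv (𝕜 ι : Type*) [NontriviallyNormedField 𝕜]
    [CompleteSpace 𝕜] [Fintype ι] [DecidableEq ι] :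
    Matrix ι ι 𝕜 ≃A[𝕜] ((ι → 𝕜) →L[𝕜] (ι → 𝕜)) :=
  let e := Matrix.toLinAlgEquiv'.trans (Module.End.toContinuousLinearMap (ι → 𝕜))
  { e with
    continuous_toFun := e.toLinearMap.continuous_of_finiteDimensional
    continuous_invFun := e.symm.toLinearMap.continuous_of_finiteDimensional }

theorem mulVecContinuousAlgEquiv_apply {𝕜 ι : Type*} [NontriviallyNormedField 𝕜]
    [CompleteSpace 𝕜] [Fintype ι] [DecidableEq ι] (M : Matrix ι ι 𝕜) (x : ι → 𝕜) :
    mulVecContinuousAlgEquiv 𝕜 ι M x = M.mulVec x :=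
  rfl

theorem phiMat_mulVec {n : ℕ} (k : ℕ) (M : Matrix (Fin n) (Fin n) ℝ) (x : Fin n → ℝ) :
    (phiMat k M).mulVec x = expPhi k (mulVecContinuousAlgEquiv ℝ (Fin n) M) x := by
  let e := mulVecContinuousAlgEquiv ℝ (Fin n)
  have hmap : e (phiMat k M) = expPhi k (e M) :=
    calc e (phiMat k M)
        = ∫ t in (0 : ℝ)..1, e (t ^ k • exp ((1 - t) • M)) := by
          simp only [phiMat, integral_of_le zero_le_one]
          exact (e.toContinuousLinearEquiv.integral_comp_comm _).symm
      _ = expPhi k (e M) := by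
          simp only [expPhi, map_smul, continuousAlgEquiv_map_exp]
  exact congr($hmap x)

end Matrix

/-- If `v(0) = v_0` and `v'(t) = α·L·v(t) + Σ_{k=0}^{K} (t/H)^k u_k` on `[0,H]`, then
`v(H) = exp(αH·L)·v_0 + H·Σ_{k=0}^{K} φ_{k+1}(αH·L)·u_k`. -/
theorem stmt2 {n K : ℕ} (L : Matrix (Fin n) (Fin n) ℝ) (α H : ℝ) (hH : 0 < H)
    (v0 : Fin n → ℝ) (u : Fin (K + 1) → Fin n → ℝ) (v : ℝ → Fin n → ℝ)
    (hv0 : v 0 = v0)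
    (hv : ∀ t ∈ Set.Icc (0:ℝ) H,
      HasDerivAt v (α • L.mulVec (v t) + ∑ k : Fin (K + 1), (t / H) ^ (k : ℕ) • u k) t) :
    v H = (NormedSpace.exp ((α * H) • L)).mulVec v0
      + H • ∑ k : Fin (K + 1), (phiMat (k : ℕ) ((α * H) • L)).mulVec (u k) := by
  simpa [← map_smul, smul_smul, mul_comm H α, ← continuousAlgEquiv_map_exp, phiMat_mulVec,
    mulVecContinuousAlgEquiv_apply, ← hv0] using
    stmt2_general (mulVecContinuousAlgEquiv ℝ (Fin n) (α • L)) hH.ne' u fun t ht ↦ by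
      simpa [mulVecContinuousAlgEquiv_apply] using (hv t (uIcc_of_le hH.le ▸ ht)).hasDerivWithinAt
end

section
/- Let λ^f, λ^s ∈ ℂ, H > 0, Δc ∈ ℝ, w, Y_1, …, Y_p ∈ ℂ, and real coefficients γ^k_j for 1 ≤ j ≤ p and 0 ≤ k ≤ K. If v : ℝ → ℂ satisfies v(0) = w and v'(θ) = Δc·λ^f·v(θ) + λ^s·Σ_{j=1}^{p} Σ_{k=0}^{K} γ^k_j (θ/H)^k Y_j for every θ ∈ [0,H], then v(H) = φ_0(Δc·Hλ^f)·w + Hλ^s·Σ_{j=1}^{p} ( Σ_{k=0}^{K} γ^k_j φ_{k+1}(Δc·Hλ^f) )·Y_j. (This is the exact solution of one MRI-GARK stage applied to the scalar test problem y' = λ^f y + λ^s y.) -/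
/-- The `φ` functions: `φ_0(z) = e^z` and, for `k ≥ 1`,
`φ_k(z) = ∫_0^1 e^{z(1−t)} t^{k−1} dt`. -/
noncomputable def phi : ℕ → ℂ → ℂ
  | 0, z => Complex.exp z
  | (k + 1), z => ∫ t in (0:ℝ)..1, Complex.exp (z * (1 - (t : ℂ))) * (t : ℂ) ^ k

/-!
If `v' = a v + g`, then `exp (a (t₁ - s)) v(s)` has derivative `exp (a (t₁ - s)) g(s)`, and
integrating gives the variation-of-constants formula. For a polynomial forcing term `g`, rescaling
time by `H` turns the integral against each monomial `(s / H) ^ k` into `H φ_{k+1}(a H)`.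
-/

open Set MeasureTheory

theorem hasDerivAt_cexp_mul_sub (a : ℂ) (t s : ℝ) :
    HasDerivAt (fun s : ℝ ↦ Complex.exp (a * (t - s))) (-(Complex.exp (a * (t - s)) * a)) s := by
  have hsub : HasDerivAt (fun s : ℝ ↦ (t : ℂ) - s) (-1) s :=
    (Complex.ofRealCLM.hasDerivAt (x := s)).const_sub (t : ℂ)
  simpa using (hsub.const_mul a).cexp

theorem integral_cexp_mul_sub_mul_div_pow (a : ℂ) {H : ℝ} (hH : H ≠ 0) (k : ℕ) :
    ∫ s in (0 : ℝ)..H, Complex.exp (a * (H - s)) * ((s / H : ℝ) : ℂ) ^ k =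
      H * phi (k + 1) (a * H) := by
  have hrescale := intervalIntegral.smul_integral_comp_mul_left (a := 0) (b := 1)
    (fun s : ℝ ↦ Complex.exp (a * (H - s)) * ((s / H : ℝ) : ℂ) ^ k) H
  rw [mul_zero, mul_one] at hrescale
  rw [← hrescale, Complex.real_smul, phi]
  congr 1
  refine intervalIntegral.integral_congr fun t _ ↦ ?_
  have hexp : a * (H - (H * t : ℝ)) = a * H * (1 - t) := by push_cast; ring
  simp only [hexp, mul_div_cancel_left₀ t hH]

section LinearODE

variable {E : Type*} [NormedAddCommGroup E] [NormedSpace ℂ E] {a : ℂ} {v : ℝ → E}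

theorem hasDerivWithinAt_cexp_smul_of_linear {x : E} {s t : ℝ} {S : Set ℝ}
    (hv : HasDerivWithinAt v (a • v s + x) S s) :
    HasDerivWithinAt (fun s : ℝ ↦ Complex.exp (a * (t - s)) • v s)
      (Complex.exp (a * (t - s)) • x) S s := by
  refine ((hasDerivAt_cexp_mul_sub a t s).hasDerivWithinAt.smul hv).congr_deriv ?_
  module

variable [CompleteSpace E]

theorem eq_cexp_smul_add_integral_of_hasDerivWithinAt {g : ℝ → E} {t₀ t₁ : ℝ}
    (hcont : ContinuousOn v (uIcc t₀ t₁))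
    (hv : ∀ s ∈ uIoo t₀ t₁, HasDerivWithinAt v (a • v s + g s) (Ioi s) s)
    (hg : IntervalIntegrable g volume t₀ t₁) :
    v t₁ = Complex.exp (a * (t₁ - t₀)) • v t₀ +
      ∫ s in t₀..t₁, Complex.exp (a * (t₁ - s)) • g s := by
  have hexp : Continuous fun s : ℝ ↦ Complex.exp (a * (t₁ - s)) := by fun_prop
  have hFTC := intervalIntegral.integral_eq_sub_of_hasDeriv_right
    (hexp.continuousOn.smul hcont)
    (fun s hs ↦ hasDerivWithinAt_cexp_smul_of_linear (t := t₁) (hv s hs))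
    (hg.continuousOn_smul hexp.continuousOn)
  rw [hFTC]
  simp

theorem eq_phi_smul_add_sum_of_hasDerivWithinAt {n : ℕ} {H : ℝ} (hH : H ≠ 0) {c : Fin n → E}
    (hcont : ContinuousOn v (uIcc 0 H))
    (hv : ∀ s ∈ uIoo 0 H, HasDerivWithinAt v
      (a • v s + ∑ k : Fin n, ((s / H : ℝ) : ℂ) ^ (k : ℕ) • c k) (Ioi s) s) :
    v H = phi 0 (a * H) • v 0 + (H : ℂ) • ∑ k : Fin n, phi ((k : ℕ) + 1) (a * H) • c k := by
  have hforcing : Continuous fun s : ℝ ↦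
      ∑ k : Fin n, ((s / H : ℝ) : ℂ) ^ (k : ℕ) • c k := by fun_prop
  rw [eq_cexp_smul_add_integral_of_hasDerivWithinAt hcont hv (hforcing.intervalIntegrable 0 H)]
  congr 1
  · simp [phi]
  · simp only [Finset.smul_sum, smul_smul]
    rw [intervalIntegral.integral_finsetSum
      fun k _ ↦ Continuous.intervalIntegrable (by fun_prop) _ _]
    simp only [intervalIntegral.integral_smul_const, integral_cexp_mul_sub_mul_div_pow a hH]

theorem stmt3_general {ι : Type*} [Fintype ι] {n : ℕ} {H : ℝ} (hH : H ≠ 0) (b : ℂ) (Y : ι → E)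
    (γ : Fin n → ι → ℂ) (hcont : ContinuousOn v (uIcc 0 H))
    (hv : ∀ θ ∈ uIoo 0 H, HasDerivWithinAt v
      (a • v θ + b • ∑ j, ∑ k, (γ k j * ((θ / H : ℝ) : ℂ) ^ (k : ℕ)) • Y j) (Ioi θ) θ) :
    v H = phi 0 (a * H) • v 0 +
      (H * b) • ∑ j, (∑ k, γ k j * phi ((k : ℕ) + 1) (a * H)) • Y j := by
  have collect (f : Fin n → ℂ) :
      ∑ k, f k • b • ∑ j, γ k j • Y j = b • ∑ j, ∑ k, (γ k j * f k) • Y j := by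
    simp only [Finset.smul_sum]
    rw [Finset.sum_comm]
    refine Finset.sum_congr rfl fun j _ ↦ Finset.sum_congr rfl fun k _ ↦ ?_
    module
  simp only [← collect] at hv
  rw [eq_phi_smul_add_sum_of_hasDerivWithinAt hH hcont hv, collect, mul_smul]
  simp only [Finset.sum_smul]

end LinearODE

/-- Exact solution of one MRI-GARK stage applied to the scalar test problem
`y' = λᶠ y + λˢ y`: if `v(0) = w` and
`v'(θ) = Δc·λᶠ·v(θ) + λˢ·Σ_j Σ_k γᵏ_j (θ/H)^k Y_j` on `[0,H]`, then
`v(H) = φ_0(Δc·Hλᶠ)·w + Hλˢ·Σ_j (Σ_k γᵏ_j φ_{k+1}(Δc·Hλᶠ))·Y_j`. -/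
theorem stmt3 {p K : ℕ} (lamf lams : ℂ) (H : ℝ) (hH : 0 < H) (Δc : ℝ)
    (w : ℂ) (Y : Fin p → ℂ) (γ : Fin (K + 1) → Fin p → ℝ) (v : ℝ → ℂ)
    (hv0 : v 0 = w)
    (hv : ∀ θ ∈ Set.Icc (0:ℝ) H,
      HasDerivAt v ((Δc : ℂ) * lamf * v θ
        + lams * ∑ j : Fin p, ∑ k : Fin (K + 1),
            (γ k j : ℂ) * ((θ / H : ℝ) : ℂ) ^ (k : ℕ) * Y j) θ) :
    v H = phi 0 ((Δc : ℂ) * (H : ℂ) * lamf) * w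
      + (H : ℂ) * lams * ∑ j : Fin p,
          (∑ k : Fin (K + 1), (γ k j : ℂ) * phi ((k : ℕ) + 1) ((Δc : ℂ) * (H : ℂ) * lamf)) * Y j := by
  rw [mul_right_comm (Δc : ℂ) H lamf, ← hv0]
  rw [← uIcc_of_le hH.le] at hv
  exact stmt3_general hH.ne' lams Y (fun k j ↦ (γ k j : ℂ))
    (fun θ hθ ↦ (hv θ hθ).continuousAt.continuousWithinAt)
    fun θ hθ ↦ (hv θ (uIoo_subset_uIcc_self hθ)).hasDerivWithinAt
end

section
/- Let λ^f, λ^s ∈ ℂ, H > 0, z^f := Hλ^f, z^s := Hλ^s with z^s ≠ 2, and y_n ∈ ℂ. Suppose v : ℝ → ℂ satisfies v(0) = y_n and v'(θ) = λ^f·v(θ) + λ^s·y_n for all θ ∈ [0,H]; set Y_2 := v(H). Suppose y_{n+1} ∈ ℂ satisfies the implicit relation y_{n+1} = Y_2 − (Hλ^s/2)·y_n + (Hλ^s/2)·y_{n+1}. Then y_{n+1} = R(z^f, z^s)·y_n with R(z^f, z^s) = ( φ_0(z^f) + (φ_1(z^f) − 1/2)·z^s ) / ( 1 − z^s/2 ).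 (This is the stability function of the implicit trapezoidal MRI-GARK scheme on the test problem y' = λ^f y + λ^s y.) -/
/-!
Multiplying `v' = a v + g` by the integrating factor `e^{a(t - θ)}` gives the variation of constants
formula. For the constant forcing `g = λˢ yₙ`, rescaling the remaining integral from `[0, H]` to
`[0, 1]` turns it into `φ_1`, so `Y₂ = (φ_0(zᶠ) + φ_1(zᶠ) zˢ) yₙ`, and the implicit relation is then
a linear equation for `yₙ₊₁`.
-/

open Complex MeasureTheory Set

theorem phi_zero (z : ℂ) : phi 0 z = exp z := rfl

theorem integral_exp_mul_sub_mul_pow (a : ℂ) (H : ℝ) (k : ℕ) :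
    ∫ θ in (0 : ℝ)..H, exp (a * (H - θ)) * (θ : ℂ) ^ k =
      (H : ℂ) ^ (k + 1) * phi (k + 1) (H * a) := by
  calc
    ∫ θ in (0 : ℝ)..H, exp (a * (H - θ)) * (θ : ℂ) ^ k
      = H • ∫ t in (0 : ℝ)..1, exp (a * (H - (H * t : ℝ))) * ((H * t : ℝ) : ℂ) ^ k := by
        rw [intervalIntegral.smul_integral_comp_mul_left
          (fun θ : ℝ ↦ exp (a * (H - θ)) * (θ : ℂ) ^ k), mul_zero, mul_one]
    _ = H • ∫ t in (0 : ℝ)..1, (H : ℂ) ^ k * (exp (H * a * (1 - t)) * (t : ℂ) ^ k) := by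
        congr! 3 with t
        push_cast
        ring_nf
    _ = (H : ℂ) ^ (k + 1) * phi (k + 1) (H * a) := by
        rw [intervalIntegral.integral_const_mul, real_smul, pow_succ', mul_assoc, phi]

theorem eq_inv_one_sub_smul_of_eq_add_smul {K M : Type*} [DivisionRing K] [AddCommGroup M]
    [Module K M] {c : K} {x w : M} (hc : c ≠ 1) (hx : x = w + c • x) : x = (1 - c)⁻¹ • w := by
  rw [eq_inv_smul_iff₀ (sub_ne_zero.mpr hc.symm), sub_smul, one_smul, sub_eq_iff_eq_add]
  exact hx

section LinearODE

variable {E : Type*} [NormedAddCommGroup E] [NormedSpace ℂ E] {a : ℂ} {v : ℝ → E}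

theorem hasDerivWithinAt_exp_mul_sub_smul {g : E} {S : Set ℝ} {θ : ℝ} (t : ℝ)
    (hv : HasDerivWithinAt v (a • v θ + g) S θ) :
    HasDerivWithinAt (fun s : ℝ ↦ exp (a * (t - s)) • v s) (exp (a * (t - θ)) • g) S θ := by
  have hexp : HasDerivAt (fun s : ℝ ↦ exp (a * (t - s))) (exp (a * (t - θ)) * (a * -1)) θ :=
    ((ofRealCLM.hasDerivAt.const_sub (t : ℂ)).const_mul a).cexp
  exact (hexp.hasDerivWithinAt.smul hv).congr_deriv (by module)

variable [CompleteSpace E]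

theorem eq_exp_smul_add_integral_of_hasDeriv_right {g : ℝ → E} {s t : ℝ}
    (hcont : ContinuousOn v (uIcc s t))
    (hderiv : ∀ θ ∈ Ioo (min s t) (max s t), HasDerivWithinAt v (a • v θ + g θ) (Ioi θ) θ)
    (hg : IntervalIntegrable g volume s t) :
    v t = exp (a * (t - s)) • v s + ∫ θ in s..t, exp (a * (t - θ)) • g θ := by
  have hexp : Continuous fun θ : ℝ ↦ exp (a * (t - θ)) := by fun_prop
  have hint : ∫ θ in s..t, exp (a * (t - θ)) • g θ = v t - exp (a * (t - s)) • v s := by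
    simpa only [Pi.smul_apply', sub_self, mul_zero, exp_zero, one_smul] using
      intervalIntegral.integral_eq_sub_of_hasDeriv_right (hexp.continuousOn.smul hcont)
        (fun θ hθ ↦ hasDerivWithinAt_exp_mul_sub_smul t (hderiv θ hθ))
        (hg.continuousOn_smul hexp.continuousOn)
  rw [hint, add_sub_cancel]

theorem eq_phi_zero_smul_add_phi_one_smul_of_hasDeriv_right {w : E} {H : ℝ}
    (hcont : ContinuousOn v (uIcc 0 H))
    (hderiv : ∀ θ ∈ Ioo (min 0 H) (max 0 H), HasDerivWithinAt v (a • v θ + w) (Ioi θ) θ) :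
    v H = phi 0 (H * a) • v 0 + (H * phi 1 (H * a)) • w := by
  have hphi : ∫ θ in (0 : ℝ)..H, exp (a * (H - θ)) = H * phi 1 (H * a) := by
    simpa only [pow_zero, mul_one, zero_add, pow_one] using integral_exp_mul_sub_mul_pow a H 0
  rw [eq_exp_smul_add_integral_of_hasDeriv_right hcont hderiv intervalIntegrable_const,
    intervalIntegral.integral_smul_const, hphi, ofReal_zero, sub_zero, mul_comm a, phi_zero]

end LinearODE

theorem stmt4_general {E : Type*} [NormedAddCommGroup E] [NormedSpace ℂ E] [CompleteSpace E]
    (lamf lams : ℂ) (H : ℝ) (zf zs : ℂ) (hzf : zf = (H : ℂ) * lamf) (hzs : zs = (H : ℂ) * lams)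
    (hzs2 : zs ≠ 2) (yn : E) (v : ℝ → E) (hv0 : v 0 = yn) (hcont : ContinuousOn v (uIcc 0 H))
    (hderiv : ∀ θ ∈ Ioo (min 0 H) (max 0 H),
      HasDerivWithinAt v (lamf • v θ + lams • yn) (Ioi θ) θ)
    (Y2 : E) (hY2 : Y2 = v H) (ynp1 : E)
    (hynp1 : ynp1 = Y2 - ((H : ℂ) * lams / 2) • yn + ((H : ℂ) * lams / 2) • ynp1) :
    ynp1 = ((phi 0 zf + (phi 1 zf - 1 / 2) * zs) / (1 - zs / 2)) • yn := by
  have hY2_eq : Y2 = (phi 0 zf + phi 1 zf * zs) • yn := by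
    rw [hY2, eq_phi_zero_smul_add_phi_one_smul_of_hasDeriv_right hcont hderiv, hv0, ← hzf, hzs]
    module
  have hne : zs / 2 ≠ 1 := by rwa [ne_eq, div_eq_one_iff_eq two_ne_zero]
  rw [← hzs] at hynp1
  rw [eq_inv_one_sub_smul_of_eq_add_smul hne hynp1, hY2_eq]
  module

/-- Stability function of the implicit trapezoidal MRI-GARK scheme on the test
problem `y' = λᶠ y + λˢ y`: with `zᶠ = Hλᶠ`, `zˢ = Hλˢ ≠ 2`, if `v(0) = yₙ`,
`v'(θ) = λᶠ v(θ) + λˢ yₙ` on `[0,H]`, `Y₂ = v(H)`, and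
`yₙ₊₁ = Y₂ − (Hλˢ/2) yₙ + (Hλˢ/2) yₙ₊₁`, then
`yₙ₊₁ = (φ_0(zᶠ) + (φ_1(zᶠ) − 1/2) zˢ) / (1 − zˢ/2) · yₙ`. -/
theorem stmt4 (lamf lams : ℂ) (H : ℝ) (hH : 0 < H)
    (zf zs : ℂ) (hzf : zf = (H : ℂ) * lamf) (hzs : zs = (H : ℂ) * lams)
    (hzs2 : zs ≠ 2) (yn : ℂ) (v : ℝ → ℂ) (hv0 : v 0 = yn)
    (hv : ∀ θ ∈ Set.Icc (0:ℝ) H, HasDerivAt v (lamf * v θ + lams * yn) θ)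
    (Y2 : ℂ) (hY2 : Y2 = v H) (ynp1 : ℂ)
    (hynp1 : ynp1 = Y2 - ((H : ℂ) * lams / 2) * yn + ((H : ℂ) * lams / 2) * ynp1) :
    ynp1 = ((phi 0 zf + (phi 1 zf - 1 / 2) * zs) / (1 - zs / 2)) * yn := by
  have hIcc : uIcc 0 H = Icc 0 H := uIcc_of_le hH.le
  exact stmt4_general lamf lams H zf zs hzf hzs hzs2 yn v hv0
    (fun θ hθ ↦ (hv θ (hIcc ▸ hθ)).continuousAt.continuousWithinAt)
    (fun θ hθ ↦ (hv θ (hIcc ▸ Ioo_subset_Icc_self hθ)).hasDerivWithinAt) Y2 hY2 ynp1 hynp1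
end

section
/- Let Γ^0, …, Γ^K be real s×s matrices and Δc ∈ ℝ^s. Then the following are equivalent: (i) Γ^0·1_s = Δc and Γ^k·1_s = 0 for every k = 1, …, K; (ii) for every m ≥ 1, every m×m real matrix A and every d ∈ ℝ^m with A·1_m = d, and every index i ∈ {1,…,s}, one has the vector identity Δc_i·d = Σ_{k=0}^{K} (Γ^k·1_s)_i · (A·d^{∘k}) in ℝ^m. (Condition (ii) is the GARK internal-consistency condition c^{ff} = c^{fs} of the MRI-GARK scheme, required to hold for every consistent fast Runge–Kutta method.) -/
/-! For a one-stage method `A = (x)`, `d = (x)`, consistency condition (ii) says that the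
polynomials `∑ k, (Γ k 1)ᵢ X ^ (k + 1)` and `Δcᵢ X` agree at `x`. Over an infinite domain, letting
`x` vary, they have equal coefficients, which is (i). Conversely, under (i) only the summand
`k = 0` survives, and it is `Δcᵢ • A 1 = Δcᵢ • d`. -/

section InternalConsistency

open Matrix

theorem eq_piSingle_iff {ι : Type*} [DecidableEq ι] {M : ι → Type*} [∀ i, Zero (M i)]
    {f : ∀ i, M i} {i : ι} {a : M i} :
    f = Pi.single i a ↔ f i = a ∧ ∀ j, j ≠ i → f j = 0 := by
  constructor
  · rintro rfl
    exact ⟨Pi.single_eq_same i a, fun j hj ↦ Pi.single_eq_of_ne hj a⟩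
  · rintro ⟨rfl, h⟩
    ext j
    obtain rfl | hj := eq_or_ne j i
    · rw [Pi.single_eq_same]
    · rw [h j hj, Pi.single_eq_of_ne hj]

theorem smul_eq_sum_piSingle_smul_mulVec_pow {R m : Type*} [Semiring R] [Fintype m]
    {A : Matrix m m R} {d : m → R} (hA : A *ᵥ 1 = d) (K : ℕ) (a : R) :
    a • d = ∑ k : Fin (K + 1), (Pi.single 0 a : Fin (K + 1) → R) k • (A *ᵥ d ^ (k : ℕ)) := by
  rw [Fintype.sum_eq_single 0 fun k hk ↦ by rw [Pi.single_eq_of_ne hk, zero_smul],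
    Pi.single_eq_same, Fin.val_zero, pow_zero, hA]

section InfiniteDomain

variable {R : Type*} [CommRing R] [IsDomain R] [Infinite R]

theorem eq_zero_of_forall_sum_mul_pow_succ_eq_zero {n : ℕ} {w : Fin n → R}
    (h : ∀ x : R, ∑ k, w k * x ^ ((k : ℕ) + 1) = 0) : w = 0 := by
  let nodes : Fin (n + 1) ↪ R := Fin.valEmbedding.trans (Infinite.natEmbedding R)
  have hcons : (Fin.cons 0 w : Fin (n + 1) → R) = 0 :=
    eq_zero_of_forall_index_sum_mul_pow_eq_zero nodes.injective fun j ↦ by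
      simpa [Fin.sum_univ_succ] using h (nodes j)
  ext k
  simpa using congrFun hcons k.succ

theorem eq_of_forall_sum_mul_pow_succ_eq {n : ℕ} {v w : Fin n → R}
    (h : ∀ x : R, ∑ k, v k * x ^ ((k : ℕ) + 1) = ∑ k, w k * x ^ ((k : ℕ) + 1)) : v = w :=
  sub_eq_zero.mp <| eq_zero_of_forall_sum_mul_pow_succ_eq_zero fun x ↦ by
    simp only [Pi.sub_apply, sub_mul, Finset.sum_sub_distrib, h x, sub_self]

theorem eq_piSingle_of_forall_oneStage {K : ℕ} {a : R} {w : Fin (K + 1) → R}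
    (h : ∀ (A : Matrix (Fin 1) (Fin 1) R) (d : Fin 1 → R), A *ᵥ 1 = d →
      a • d = ∑ k, w k • (A *ᵥ d ^ (k : ℕ))) :
    w = Pi.single 0 a := by
  refine eq_of_forall_sum_mul_pow_succ_eq fun x ↦ ?_
  let A : Matrix (Fin 1) (Fin 1) R := diagonal fun _ ↦ x
  let d : Fin 1 → R := fun _ ↦ x
  have hA : A *ᵥ 1 = d := by
    ext
    simp [A, d]
  have hsum : ∑ k, w k • (A *ᵥ d ^ (k : ℕ)) =
      ∑ k, (Pi.single 0 a : Fin (K + 1) → R) k • (A *ᵥ d ^ (k : ℕ)) :=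
    (h A d hA).symm.trans (smul_eq_sum_piSingle_smul_mulVec_pow hA K a)
  simpa [A, d, mulVec_diagonal, pow_succ'] using congrFun hsum 0

theorem stmt6_general {σ τ : Type*} [Fintype τ] {K : ℕ} (Γ : Fin (K + 1) → Matrix σ τ R)
    (Δc : σ → R) :
    (Γ 0 *ᵥ 1 = Δc ∧ ∀ k, k ≠ 0 → Γ k *ᵥ 1 = 0) ↔
      ∀ m : ℕ, 1 ≤ m → ∀ (A : Matrix (Fin m) (Fin m) R) (d : Fin m → R), A *ᵥ 1 = d →
        ∀ i, Δc i • d = ∑ k, (Γ k *ᵥ 1) i • (A *ᵥ d ^ (k : ℕ)) := by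
  have rowwise : (Γ 0 *ᵥ 1 = Δc ∧ ∀ k, k ≠ 0 → Γ k *ᵥ 1 = 0) ↔
      ∀ i, (fun k ↦ (Γ k *ᵥ 1) i) = Pi.single 0 (Δc i) := by
    simp_rw [eq_piSingle_iff, forall_and]
    simp only [funext_iff, Pi.zero_apply]
    exact and_congr_right' ⟨fun h i k hk ↦ h k hk i, fun h k hk i ↦ h i k hk⟩
  rw [rowwise]
  constructor
  · intro h m _ A d hA i
    simpa only [← h i] using smul_eq_sum_piSingle_smul_mulVec_pow hA K (Δc i)
  · exact fun h i ↦ eq_piSingle_of_forall_oneStage fun A d hA ↦ h 1 le_rfl A d hA i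

end InfiniteDomain

end InternalConsistency

/-- Internal consistency of MRI-GARK schemes. For coupling matrices
`Γ^0, …, Γ^K ∈ ℝ^{s×s}` and `Δc ∈ ℝ^s`, the following are equivalent:
(i) `Γ^0·1 = Δc` and `Γ^k·1 = 0` for `k ≥ 1`;
(ii) for every `m ≥ 1`, every `m×m` matrix `A` and `d ∈ ℝ^m` with `A·1 = d`
(a consistent fast Runge–Kutta method), and every `i`,
`Δc_i·d = Σ_k (Γ^k·1)_i·(A·d^{∘k})` (the GARK condition `c^{ff} = c^{fs}`). -/
theorem stmt6 {s K : ℕ} (Γ : Fin (K + 1) → Matrix (Fin s) (Fin s) ℝ)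
    (Δc : Fin s → ℝ) :
    ((Γ 0).mulVec (fun _ => 1) = Δc ∧
      ∀ k : Fin (K + 1), k ≠ 0 → (Γ k).mulVec (fun _ => 1) = 0) ↔
    (∀ m : ℕ, 1 ≤ m → ∀ A : Matrix (Fin m) (Fin m) ℝ, ∀ d : Fin m → ℝ,
      A.mulVec (fun _ => 1) = d → ∀ i : Fin s,
        Δc i • d = ∑ k : Fin (K + 1),
          ((Γ k).mulVec (fun _ => 1) i) • A.mulVec (fun ℓ => d ℓ ^ (k : ℕ))) :=
  stmt6_general Γ Δc
end

section
/- Let b, d ∈ ℝ^m with b·1_m = 1 and b·d = 1/2, and let c_1, …, c_{s+1} be reals with c_1 = 0, Δc_i := c_{i+1} − c_i. Then for every j = 1, …, s, (A^{sf}·c^{ff})_j = Σ_{i=1}^{j−1} Δc_i · ( b·(c_i·1_m + Δc_i·d) ) = c_j²/2; that is, A^{sf}·c^{ff} equals one half of the entrywise square of the slow abscissae vector (c_1,…,c_s). -/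
/-!
The two conditions on `(b, d)` say that the quadrature rule with weights `b` and nodes `d` is exact
for polynomials of degree at most one on `[0, 1]`. Transported to the `i`-th slow step it therefore
integrates `t ↦ t` exactly, with value `(c_{i+1}² - c_i²) / 2`. The `j`-th row of `A^{sf}` applied
to `c^{ff}` adds up these values over the steps preceding `c_j`, and the sum telescopes.
-/

open Finset Matrix

section GARK

variable {R ι : Type*} [NonUnitalSemiring R] {s : ℕ}

/-- The abscissae `c^{ff}` of a multirate GARK method: the fast node `d ℓ` transported to the
`i`-th slow step, which starts at `c i` and has length `Δc i`. -/
def fastAbscissae (c : Fin (s + 1) → R) (Δc : Fin s → R) (d : ι → R) : Fin s × ι → R :=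
  fun p ↦ c p.1.castSucc + Δc p.1 * d p.2

/-- The coupling matrix `A^{sf}` of a multirate GARK method: slow stage `j` collects the fast stages
of all the slow steps preceding it, with weights `b` scaled by the step length. -/
def slowFastCoupling (Δc : Fin s → R) (b : ι → R) : Matrix (Fin s) (Fin s × ι) R :=
  of fun j p ↦ if p.1 < j then Δc p.1 * b p.2 else 0

theorem slowFastCoupling_mulVec_apply [Fintype ι] (Δc : Fin s → R) (b : ι → R)
    (x : Fin s × ι → R) (j : Fin s) :
    (slowFastCoupling Δc b *ᵥ x) j = ∑ i with i < j, Δc i * ∑ ℓ, b ℓ * x (i, ℓ) := by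
  simp only [slowFastCoupling, mulVec, dotProduct, of_apply, Fintype.sum_prod_type, ite_mul,
    zero_mul, sum_ite_irrel, sum_const_zero, sum_filter, mul_sum, mul_assoc]

end GARK

theorem sum_mul_add_mul {R ι : Type*} [CommSemiring R] [Fintype ι] (b d : ι → R) (x h : R) :
    ∑ ℓ, b ℓ * (x + h * d ℓ) = x * ∑ ℓ, b ℓ + h * ∑ ℓ, b ℓ * d ℓ := by
  simp only [mul_add, sum_add_distrib, mul_sum, mul_comm, mul_left_comm]

theorem sub_mul_sum_eq_sq_div_two_sub {K ι : Type*} [Field K] [NeZero (2 : K)]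
    [Fintype ι] {b d : ι → K} (hb : ∑ ℓ, b ℓ = 1) (hbd : ∑ ℓ, b ℓ * d ℓ = 1 / 2) (x y : K) :
    (y - x) * ∑ ℓ, b ℓ * (x + (y - x) * d ℓ) = y ^ 2 / 2 - x ^ 2 / 2 := by
  rw [sum_mul_add_mul, hb, hbd]
  field_simp
  ring

theorem sum_lt_succ_sub_castSucc {M : Type*} [AddCommGroup M] {s : ℕ} (f : Fin (s + 1) → M)
    (j : Fin s) : ∑ i with i < j, (f i.succ - f i.castSucc) = f j.castSucc - f 0 := by
  have h := Fin.sum_Iic_sub j f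
  rw [← sum_Iio_add_eq_sum_Iic] at h
  rw [filter_gt_eq_Iio, eq_sub_of_add_eq h]
  abel

theorem stmt8_general {K ι : Type*} [Field K] [NeZero (2 : K)] [Fintype ι] {s : ℕ} (b d : ι → K)
    (hb1 : ∑ ℓ, b ℓ = 1) (hbd : ∑ ℓ, b ℓ * d ℓ = 1 / 2) (c : Fin (s + 1) → K)
    (Δc : Fin s → K) (hΔc : ∀ i, Δc i = c i.succ - c i.castSucc) (j : Fin s) :
    ((slowFastCoupling Δc b *ᵥ fastAbscissae c Δc d) j
      = ∑ i with i < j, Δc i * ∑ ℓ, b ℓ * (c i.castSucc + Δc i * d ℓ)) ∧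
    ∑ i with i < j, Δc i * ∑ ℓ, b ℓ * (c i.castSucc + Δc i * d ℓ)
      = (c j.castSucc ^ 2 - c 0 ^ 2) / 2 := by
  refine ⟨slowFastCoupling_mulVec_apply Δc b _ j, ?_⟩
  calc ∑ i with i < j, Δc i * ∑ ℓ, b ℓ * (c i.castSucc + Δc i * d ℓ)
      = ∑ i with i < j, (c i.succ ^ 2 / 2 - c i.castSucc ^ 2 / 2) := by
        simp only [hΔc, sub_mul_sum_eq_sq_div_two_sub hb1 hbd]
    _ = c j.castSucc ^ 2 / 2 - c 0 ^ 2 / 2 := sum_lt_succ_sub_castSucc (fun i ↦ c i ^ 2 / 2) j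
    _ = (c j.castSucc ^ 2 - c 0 ^ 2) / 2 := (sub_div ..).symm

/-- With fast weights `b` and nodes `d` satisfying `b·1 = 1` and `b·d = 1/2`,
and slow abscissae with `c_1 = 0`, `Δc_i = c_{i+1} − c_i`, for every `j`:
`(A^{sf}·c^{ff})_j = Σ_{i=1}^{j−1} Δc_i (b·(c_i·1 + Δc_i·d)) = c_j²/2`,
where `(A^{sf})_{j,(i,ℓ)} = Δc_i b_ℓ` if `j ≥ i+1` and `0` otherwise and
`c^{ff}_{(i,ℓ)} = c_i + Δc_i d_ℓ`. -/
theorem stmt8 {m s : ℕ} (b d : Fin m → ℝ)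
    (hb1 : ∑ ℓ, b ℓ = 1) (hbd : ∑ ℓ, b ℓ * d ℓ = 1 / 2)
    (c : Fin (s + 1) → ℝ) (hc0 : c 0 = 0)
    (Δc : Fin s → ℝ) (hΔc : ∀ i, Δc i = c i.succ - c i.castSucc)
    (j : Fin s) :
    (∑ p : Fin s × Fin m,
        (if (p.1 : ℕ) + 1 ≤ (j : ℕ) then Δc p.1 * b p.2 else 0)
          * (c p.1.castSucc + Δc p.1 * d p.2)
      = ∑ i ∈ Finset.univ.filter (fun i : Fin s => (i : ℕ) + 1 ≤ (j : ℕ)),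
          Δc i * ∑ ℓ, b ℓ * (c i.castSucc + Δc i * d ℓ)) ∧
    ∑ i ∈ Finset.univ.filter (fun i : Fin s => (i : ℕ) + 1 ≤ (j : ℕ)),
        Δc i * ∑ ℓ, b ℓ * (c i.castSucc + Δc i * d ℓ)
      = (c j.castSucc) ^ 2 / 2 := by
  simpa [hc0, slowFastCoupling, fastAbscissae, mulVec, dotProduct, Nat.succ_le_iff]
    using stmt8_general b d hb1 hbd c Δc hΔc j
end

section
/- Let A be an m×m real matrix and b, d ∈ ℝ^m with b·1_m = 1, b·d = 1/2 and A·1_m = d, and let c_1, …, c_{s+1} be reals with c_1 = 0, Δc_i := c_{i+1} − c_i. Then for every λ = 1, …, s and ℓ = 1, …, m, (A^{ff}·c^{ff})_{(λ,ℓ)} = (1/2)·c_λ² + c_λ·Δc_λ·d_ℓ + Δc_λ²·(A·d)_ℓ; that is, the λ-th block of A^{ff}·c^{ff} equals (1/2)c_λ²·1_m + c_λΔc_λ·d + Δc_λ²·A·d. -/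
/-!
Row `(i, ℓ)` of `A^{ff} c^{ff}` is the stage-`ℓ` fast quadrature of the identity over slow interval
`i`, plus the full fast quadratures over the slow intervals before it. Since `b·1 = 1` and
`b·d = 1/2`, the fast method integrates `t ↦ t` exactly over `[c_j, c_{j+1}]`, giving
`(c_{j+1}² - c_j²)/2`, and these contributions telescope.
-/

open Finset
open scoped Matrix

theorem sum_ite_eq_ite_lt {κ M : Type*} [LinearOrder κ] [Fintype κ] [LocallyFiniteOrderBot κ]
    [AddCommMonoid M] (f g : κ → M) (i : κ) :
    ∑ j, (if j = i then f j else if j < i then g j else 0) = f i + ∑ j ∈ Iio i, g j := by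
  have split_term (j : κ) : (if j = i then f j else if j < i then g j else 0) =
      (if j = i then f j else 0) + if j < i then g j else 0 := by
    by_cases hj : j = i <;> simp [hj]
  simp only [split_term, sum_add_distrib, sum_ite_eq', mem_univ, if_true, ← sum_filter,
    filter_gt_eq_Iio]

theorem sum_Iio_succ_sub_castSucc {G : Type*} [AddCommGroup G] {s : ℕ} (f : Fin (s + 1) → G)
    (i : Fin s) : ∑ j ∈ Iio i, (f j.succ - f j.castSucc) = f i.castSucc - f 0 := by
  have sum_Iic := Fin.sum_Iic_sub i f
  rw [← Iio_insert, sum_insert (by simp)] at sum_Iic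
  rw [eq_sub_of_add_eq' sum_Iic]
  abel

theorem dotProduct_const_add_mul {ι R : Type*} [Fintype ι] [CommSemiring R] (v d : ι → R)
    (a t : R) : (v ⬝ᵥ fun r ↦ a + t * d r) = a * (v ⬝ᵥ 1) + t * (v ⬝ᵥ d) := by
  simp only [dotProduct, Pi.one_apply, mul_sum, ← sum_add_distrib]
  exact sum_congr rfl fun r _ ↦ by ring

section FastFast

variable {κ ι R : Type*}

/-- The fast abscissae `c^{ff}` of the GARK method: the fast nodes `d` transported to each slow
interval, which starts at `c j` and has length `Δc j`. -/
def fastFastNodes [Add R] [Mul R] (c Δc : κ → R) (d : ι → R) : κ × ι → R :=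
  fun q ↦ c q.1 + Δc q.1 * d q.2

/-- The fast-fast coefficient matrix `A^{ff}` of the GARK method: block lower triangular, with
diagonal blocks `Δc i • A` and every row of the block in column `j` below the diagonal equal to
`Δc j • b`. -/
def fastFastMatrix [LinearOrder κ] [Mul R] [Zero R] (A : Matrix ι ι R) (b : ι → R) (Δc : κ → R) :
    Matrix (κ × ι) (κ × ι) R :=
  .of fun p q ↦
    if q.1 = p.1 then Δc p.1 * A p.2 q.2 else if q.1 < p.1 then Δc q.1 * b q.2 else 0

variable [LinearOrder κ] [Fintype κ] [LocallyFiniteOrderBot κ] [Fintype ι]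

theorem fastFastMatrix_mulVec_apply [NonUnitalSemiring R] (A : Matrix ι ι R) (b : ι → R)
    (Δc : κ → R) (x : κ × ι → R) (i : κ) (ℓ : ι) :
    (fastFastMatrix A b Δc *ᵥ x) (i, ℓ) =
      Δc i * (A ℓ ⬝ᵥ fun r ↦ x (i, r)) + ∑ j ∈ Iio i, Δc j * (b ⬝ᵥ fun r ↦ x (j, r)) := by
  have block (j : κ) : ∑ r, fastFastMatrix A b Δc (i, ℓ) (j, r) * x (j, r) =
      if j = i then Δc i * (A ℓ ⬝ᵥ fun r ↦ x (j, r))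
      else if j < i then Δc j * (b ⬝ᵥ fun r ↦ x (j, r)) else 0 := by
    simp only [fastFastMatrix, Matrix.of_apply, dotProduct, mul_sum]
    split_ifs <;> simp only [mul_assoc, zero_mul, sum_const_zero]
  rw [Matrix.mulVec, dotProduct, Fintype.sum_prod_type]
  simp only [block, sum_ite_eq_ite_lt]

theorem fastFastMatrix_mulVec_fastFastNodes [CommSemiring R] (A : Matrix ι ι R) (b d : ι → R)
    (c Δc : κ → R) (i : κ) (ℓ : ι) :
    (fastFastMatrix A b Δc *ᵥ fastFastNodes c Δc d) (i, ℓ) =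
      Δc i * (c i * (A *ᵥ 1) ℓ + Δc i * (A *ᵥ d) ℓ) +
        ∑ j ∈ Iio i, Δc j * (c j * (b ⬝ᵥ 1) + Δc j * (b ⬝ᵥ d)) := by
  simp only [fastFastMatrix_mulVec_apply, fastFastNodes, dotProduct_const_add_mul]
  rfl

end FastFast

theorem sub_mul_add_sub_mul_invOf_two {R : Type*} [CommRing R] [Invertible (2 : R)] (x y : R) :
    (y - x) * (x + (y - x) * ⅟2) = ⅟2 * y ^ 2 - ⅟2 * x ^ 2 := by
  linear_combination (x ^ 2 - x * y) * invOf_mul_self (2 : R)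

theorem stmt9_general {ι R : Type*} [Fintype ι] [CommRing R] [Invertible (2 : R)] {s : ℕ}
    (A : Matrix ι ι R) (b d : ι → R) (hb1 : b ⬝ᵥ 1 = 1) (hbd : b ⬝ᵥ d = ⅟2) (hA1 : A *ᵥ 1 = d)
    (c : Fin (s + 1) → R) (Δc : Fin s → R) (hΔc : ∀ i, Δc i = c i.succ - c i.castSucc)
    (i : Fin s) (ℓ : ι) :
    (fastFastMatrix A b Δc *ᵥ fastFastNodes (fun j ↦ c j.castSucc) Δc d) (i, ℓ) =
      ⅟2 * (c i.castSucc ^ 2 - c 0 ^ 2) + c i.castSucc * Δc i * d ℓ +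
        Δc i ^ 2 * (A *ᵥ d) ℓ := by
  have quadrature (j : Fin s) : Δc j * (c j.castSucc * (b ⬝ᵥ 1) + Δc j * (b ⬝ᵥ d)) =
      ⅟2 * c j.succ ^ 2 - ⅟2 * c j.castSucc ^ 2 := by
    rw [hb1, hbd, mul_one, hΔc, sub_mul_add_sub_mul_invOf_two]
  have telescope : ∑ j ∈ Iio i, Δc j * (c j.castSucc * (b ⬝ᵥ 1) + Δc j * (b ⬝ᵥ d)) =
      ⅟2 * c i.castSucc ^ 2 - ⅟2 * c 0 ^ 2 := by
    simp only [quadrature]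
    exact sum_Iio_succ_sub_castSucc (fun k ↦ ⅟2 * c k ^ 2) i
  rw [fastFastMatrix_mulVec_fastFastNodes, telescope, hA1]
  ring

/-- With a fast Runge–Kutta method `(A, b, d)` satisfying `b·1 = 1`, `b·d = 1/2`,
`A·1 = d`, and slow abscissae with `c_1 = 0`, `Δc_i = c_{i+1} − c_i`, the block
`(A^{ff}·c^{ff})` at row `(λ,ℓ)` equals
`(1/2)c_λ² + c_λ·Δc_λ·d_ℓ + Δc_λ²·(A·d)_ℓ`, where
`(A^{ff})_{(i,ℓ),(λ,r)} = Δc_i A_{ℓ,r}` if `λ = i`, `Δc_λ b_r` if `λ < i`, `0` if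
`λ > i`, and `c^{ff}_{(λ,r)} = c_λ + Δc_λ d_r`. -/
theorem stmt9 {m s : ℕ} (A : Matrix (Fin m) (Fin m) ℝ) (b d : Fin m → ℝ)
    (hb1 : ∑ ℓ, b ℓ = 1) (hbd : ∑ ℓ, b ℓ * d ℓ = 1 / 2)
    (hA1 : ∀ ℓ, ∑ r, A ℓ r = d ℓ)
    (c : Fin (s + 1) → ℝ) (hc0 : c 0 = 0)
    (Δc : Fin s → ℝ) (hΔc : ∀ i, Δc i = c i.succ - c i.castSucc)
    (i : Fin s) (ℓ : Fin m) :
    ∑ q : Fin s × Fin m,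
        (if q.1 = i then Δc i * A ℓ q.2
          else if (q.1 : ℕ) < (i : ℕ) then Δc q.1 * b q.2 else 0)
          * (c q.1.castSucc + Δc q.1 * d q.2)
      = (1 / 2) * (c i.castSucc) ^ 2 + c i.castSucc * Δc i * d ℓ
        + (Δc i) ^ 2 * ∑ r, A ℓ r * d r := by
  simpa [hc0, Matrix.mulVec, dotProduct, fastFastMatrix, fastFastNodes] using
    stmt9_general A b d (by simp [dotProduct, hb1]) (by simp [dotProduct, hbd])
      (by ext k; simp [Matrix.mulVec, dotProduct, hA1]) c Δc hΔc i ℓ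
end

section
/- Let A be an m×m real matrix, b, d ∈ ℝ^m, and ζ_0, …, ζ_K, ω_0, …, ω_K given reals with b·1_m = 1, b·d = 1/2, b·(A·d^{∘k}) = ζ_k and b·(d ∘ (A·d^{∘k})) = ω_k for k = 0, …, K. Let A^s, Γ^0, …, Γ^K be real s×s matrices, c_1, …, c_{s+1} reals with Δc_i := c_{i+1} − c_i, and c^s := (c_1,…,c_s) ∈ ℝ^s. Then b^f · ( c^{ff} ∘ (A^{fs}·c^s) ) = (1/2)·Σ_{i=1}^{s} (c_{i+1}² − c_i²)·(A^s·c^s)_i + Σ_{k=0}^{K} Σ_{i=1}^{s} Δc_i·( ζ_k·c_i + ω_k·Δc_i )·(Γ^k·c^s)_i. (This is the expansion used to derive the first fourth-order MRI-GARK coupling condition.) -/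
/-! The coupling matrix is a sum of Kronecker products, `A^{fs} = A^s ⊗ 1 + ∑ k, Γ^k ⊗ a_k` with
`a_k = A·d^{∘k}`, so by linearity it suffices to evaluate `b^f·(c^{ff} ∘ (w ⊗ a))`. There the sum
over the fast stages only sees the two moments `b·a` and `b·(d ∘ a)`. For `a = 1` these are `1` and
`1/2`, and `Δc_i (c_i + Δc_i / 2) = (c_{i+1}² - c_i²) / 2`. -/

namespace MRIGARK

open Matrix

variable {R σ τ μ κ : Type*} [CommSemiring R]

/-- The abscissae `c^{ff}` of the fast stages: the fast nodes `d` transported to each of the slow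
subintervals, the `i`-th of which starts at `c i` and has length `Δc i`. -/
def fastNodes (c Δc : σ → R) (d : μ → R) : σ × μ → R :=
  fun p => c p.1 + Δc p.1 * d p.2

/-- The weights `b^f` of the fast stages: the fast weights `b` scaled by the length `Δc i` of each
slow subinterval. -/
def fastWeights (Δc : σ → R) (b : μ → R) : σ × μ → R :=
  fun p => Δc p.1 * b p.2

/-- The fast–slow coupling matrix `A^{fs}`. The fast method enters only through the vectors
`a k`, which are `A·d^{∘k}` in the paper. -/
def couplingMatrix [Fintype κ] (As : Matrix σ τ R) (a : κ → μ → R) (Γ : κ → Matrix σ τ R) :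
    Matrix (σ × μ) τ R :=
  of fun p j => As p.1 j + ∑ k, a k p.2 * Γ k p.1 j

theorem couplingMatrix_mulVec [Fintype τ] [Fintype κ] (As : Matrix σ τ R) (a : κ → μ → R)
    (Γ : κ → Matrix σ τ R) (v : τ → R) :
    couplingMatrix As a Γ *ᵥ v =
      (fun p => (As *ᵥ v) p.1) + ∑ k, fun p => (Γ k *ᵥ v) p.1 * a k p.2 := by
  ext p
  simp only [couplingMatrix, mulVec, dotProduct, of_apply, Pi.add_apply, Finset.sum_apply,
    add_mul, Finset.sum_add_distrib, Finset.sum_mul]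
  rw [Finset.sum_comm]
  simp only [mul_comm, mul_left_comm]

variable [Fintype σ] [Fintype μ]

theorem fastWeights_dotProduct_fastNodes_mul_tensor (c Δc : σ → R) (b d : μ → R) (w : σ → R)
    (a : μ → R) :
    fastWeights Δc b ⬝ᵥ (fastNodes c Δc d * fun p => w p.1 * a p.2) =
      ∑ i, Δc i * ((b ⬝ᵥ a) * c i + (b ⬝ᵥ (d * a)) * Δc i) * w i := by
  simp only [dotProduct, fastWeights, fastNodes, Pi.mul_apply, Fintype.sum_prod_type,
    Finset.sum_mul, Finset.mul_sum, ← Finset.sum_add_distrib]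
  refine Fintype.sum_congr _ _ fun i => Fintype.sum_congr _ _ fun l => ?_
  ring

theorem fastWeights_dotProduct_fastNodes_mul_fst (c Δc : σ → R) (b d : μ → R) (w : σ → R) :
    fastWeights Δc b ⬝ᵥ (fastNodes c Δc d * fun p => w p.1) =
      ∑ i, Δc i * ((∑ l, b l) * c i + (b ⬝ᵥ d) * Δc i) * w i := by
  simpa only [Pi.one_apply, mul_one, dotProduct_one] using
    fastWeights_dotProduct_fastNodes_mul_tensor c Δc b d w 1

theorem fastWeights_dotProduct_fastNodes_mul_couplingMatrix_mulVec [Fintype τ] [Fintype κ]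
    (c Δc : σ → R) (b d : μ → R) (As : Matrix σ τ R) (a : κ → μ → R) (Γ : κ → Matrix σ τ R)
    (v : τ → R) :
    fastWeights Δc b ⬝ᵥ (fastNodes c Δc d * (couplingMatrix As a Γ *ᵥ v)) =
      ∑ i, Δc i * ((∑ l, b l) * c i + (b ⬝ᵥ d) * Δc i) * (As *ᵥ v) i +
        ∑ k, ∑ i, Δc i * ((b ⬝ᵥ a k) * c i + (b ⬝ᵥ (d * a k)) * Δc i) * (Γ k *ᵥ v) i := by
  simp only [couplingMatrix_mulVec, mul_add, Finset.mul_sum, dotProduct_add, dotProduct_sum,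
    fastWeights_dotProduct_fastNodes_mul_fst, fastWeights_dotProduct_fastNodes_mul_tensor]

end MRIGARK

theorem sub_mul_add_invOf_two_mul_sub {R : Type*} [CommRing R] [Invertible (2 : R)] (x y : R) :
    (y - x) * (x + ⅟2 * (y - x)) = ⅟2 * (y ^ 2 - x ^ 2) := by
  linear_combination (x ^ 2 - x * y) * invOf_mul_self (2 : R)

open Matrix MRIGARK in
theorem stmt14_general {R σ τ μ κ : Type*} [CommRing R] [Invertible (2 : R)]
    [Fintype σ] [Fintype τ] [Fintype μ] [Fintype κ] {b d : μ → R} {a : κ → μ → R} {ζ ω : κ → R}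
    (hb1 : ∑ l, b l = 1) (hbd : b ⬝ᵥ d = ⅟2)
    (hζ : ∀ k, b ⬝ᵥ a k = ζ k) (hω : ∀ k, b ⬝ᵥ (d * a k) = ω k)
    (As : Matrix σ τ R) (Γ : κ → Matrix σ τ R) {c c' Δc : σ → R} (hΔc : ∀ i, Δc i = c' i - c i)
    (v : τ → R) :
    fastWeights Δc b ⬝ᵥ (fastNodes c Δc d * (couplingMatrix As a Γ *ᵥ v)) =
      ⅟2 * ∑ i, (c' i ^ 2 - c i ^ 2) * (As *ᵥ v) i +
        ∑ k, ∑ i, Δc i * (ζ k * c i + ω k * Δc i) * (Γ k *ᵥ v) i := by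
  have slow_weight (i : σ) : Δc i * (c i + ⅟2 * Δc i) = ⅟2 * (c' i ^ 2 - c i ^ 2) := by
    rw [hΔc, sub_mul_add_invOf_two_mul_sub]
  simp only [fastWeights_dotProduct_fastNodes_mul_couplingMatrix_mulVec, hb1, hbd, hζ, hω,
    one_mul, slow_weight, mul_assoc (⅟2 : R), ← Finset.mul_sum]

/-- Expansion used for the first fourth-order MRI-GARK coupling condition:
with `b·1 = 1`, `b·d = 1/2`, `b·(A·d^{∘k}) = ζ_k`, `b·(d∘(A·d^{∘k})) = ω_k`,
`b^f·(c^{ff} ∘ (A^{fs}·c^s)) = (1/2)Σ_i (c_{i+1}² − c_i²)(A^s·c^s)_i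
  + Σ_k Σ_i Δc_i (ζ_k c_i + ω_k Δc_i)(Γ^k·c^s)_i`,
where `b^f_{(i,ℓ)} = Δc_i b_ℓ`, `c^{ff}_{(i,ℓ)} = c_i + Δc_i d_ℓ`, and
`(A^{fs})_{(i,ℓ),j} = (A^s)_{i,j} + Σ_k (A·d^{∘k})_ℓ (Γ^k)_{i,j}`. -/
theorem stmt14 {m s K : ℕ} (A : Matrix (Fin m) (Fin m) ℝ) (b d : Fin m → ℝ)
    (ζ ω : Fin (K + 1) → ℝ)
    (hb1 : ∑ ℓ, b ℓ = 1) (hbd : ∑ ℓ, b ℓ * d ℓ = 1 / 2)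
    (hζ : ∀ k : Fin (K + 1), ∑ ℓ, b ℓ * (∑ r, A ℓ r * d r ^ (k : ℕ)) = ζ k)
    (hω : ∀ k : Fin (K + 1), ∑ ℓ, b ℓ * (d ℓ * ∑ r, A ℓ r * d r ^ (k : ℕ)) = ω k)
    (As : Matrix (Fin s) (Fin s) ℝ) (Γ : Fin (K + 1) → Matrix (Fin s) (Fin s) ℝ)
    (c : Fin (s + 1) → ℝ)
    (Δc : Fin s → ℝ) (hΔc : ∀ i, Δc i = c i.succ - c i.castSucc) :
    ∑ p : Fin s × Fin m, (Δc p.1 * b p.2)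
        * ((c p.1.castSucc + Δc p.1 * d p.2)
          * ∑ j : Fin s, (As p.1 j
              + ∑ k : Fin (K + 1), (∑ r, A p.2 r * d r ^ (k : ℕ)) * Γ k p.1 j)
            * c j.castSucc)
      = (1 / 2) * (∑ i : Fin s, ((c i.succ) ^ 2 - (c i.castSucc) ^ 2)
            * ∑ j : Fin s, As i j * c j.castSucc)
        + ∑ k : Fin (K + 1), ∑ i : Fin s,
            Δc i * (ζ k * c i.castSucc + ω k * Δc i)
              * ∑ j : Fin s, Γ k i j * c j.castSucc := by
  rw [one_div, ← invOf_eq_inv] at hbd ⊢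
  exact stmt14_general hb1 hbd hζ hω As Γ hΔc fun j => c j.castSucc
end

section
/- Let A be an m×m real matrix, b, d ∈ ℝ^m, and ζ_0, …, ζ_K given reals with b·1_m = 1 and b·(A·d^{∘k}) = ζ_k for k = 0, …, K. Let A^s, Γ^0, …, Γ^K be real s×s matrices, c_1, …, c_{s+1} reals with Δc_i := c_{i+1} − c_i, c^s := (c_1,…,c_s) ∈ ℝ^s, and β ∈ ℝ^s. Then β^T·A^{sf}·A^{fs}·c^s = Σ_{i=1}^{s} Δc_i·( Σ_{ℓ=i+1}^{s} β_ℓ )·( (A^s + Σ_{k=0}^{K} ζ_k Γ^k)·c^s )_i. (This is the expansion used to derive the fourth-order MRI-GARK coupling condition d^{s T} 𝔄^{ss} c^s = 1/24.) -/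
/-!
On each slow step `i`, the row `β^T·A^{sf}` is a multiple of the fast weights `b`, so multiplying
it by `A^{fs}` averages the rows of `A^{fs}` over the fast stages with weights `b`. In that average
`As` picks up the factor `∑ ℓ, b ℓ = 1` and `Γ k` the factor `ζ k`.
-/

open Matrix

namespace GARK

variable {R ι κ τ : Type*} [CommSemiring R]

section FastSlow

variable [Fintype τ]

/-- The fast–slow coupling matrix `A^{fs}` of a multirate GARK method; its row `(i, ℓ)` belongs to
the fast stage `ℓ` in the slow step `i`. The column `k` of `F` is the vector multiplying `Γ k`: for
fast coefficients `A` and nodes `d` it is `A·d^{∘k}`. -/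
def fastSlowCoupling (As : Matrix ι ι R) (F : Matrix κ τ R) (Γ : τ → Matrix ι ι R) :
    Matrix (ι × κ) ι R :=
  of fun p j => As p.1 j + ∑ k, F p.2 k * Γ k p.1 j

variable [Fintype κ]

theorem sum_mul_fastSlowCoupling_apply (b : κ → R) (As : Matrix ι ι R) (F : Matrix κ τ R)
    (Γ : τ → Matrix ι ι R) (i j : ι) :
    ∑ ℓ, b ℓ * fastSlowCoupling As F Γ (i, ℓ) j
      = ((∑ ℓ, b ℓ) • As + ∑ k, (b ᵥ* F) k • Γ k) i j := by
  have swap : ∑ ℓ, b ℓ * ∑ k, F ℓ k * Γ k i j = ∑ k, (b ᵥ* F) k * Γ k i j := by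
    simp only [vecMul, dotProduct, Finset.mul_sum, Finset.sum_mul, mul_assoc]
    exact Finset.sum_comm
  simp only [fastSlowCoupling, of_apply, mul_add, Finset.sum_add_distrib, ← Finset.sum_mul, swap,
    Matrix.add_apply, Matrix.smul_apply, Matrix.sum_apply, smul_eq_mul]

theorem sum_mul_fastSlowCoupling_mulVec [Fintype ι] (b : κ → R) (As : Matrix ι ι R)
    (F : Matrix κ τ R) (Γ : τ → Matrix ι ι R) (x : ι → R) (i : ι) :
    ∑ ℓ, b ℓ * (fastSlowCoupling As F Γ *ᵥ x) (i, ℓ)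
      = (((∑ ℓ, b ℓ) • As + ∑ k, (b ᵥ* F) k • Γ k) *ᵥ x) i := by
  simp only [mulVec, dotProduct, ← sum_mul_fastSlowCoupling_apply, Finset.mul_sum, Finset.sum_mul,
    mul_assoc]
  exact Finset.sum_comm

end FastSlow

section SlowFast

variable [LT ι] [DecidableLT ι]

/-- The slow–fast coupling matrix `A^{sf}` of a multirate GARK method with fast weights `b`; its
column `(i, ℓ)` belongs to the fast stage `ℓ` in the slow step `i`. The weight `w i` multiplies the
slow step `i`: in the method it is the increment `Δc_i`. -/
def slowFastCoupling (w : ι → R) (b : κ → R) : Matrix ι (ι × κ) R :=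
  of fun j p => if p.1 < j then w p.1 * b p.2 else 0

variable [Fintype ι]

theorem vecMul_slowFastCoupling_apply (β w : ι → R) (b : κ → R) (p : ι × κ) :
    (β ᵥ* slowFastCoupling w b) p = (∑ j with p.1 < j, β j) * (w p.1 * b p.2) := by
  simp only [vecMul, dotProduct, slowFastCoupling, of_apply, mul_ite, mul_zero,
    Finset.sum_filter, Finset.sum_mul, ite_mul, zero_mul]

variable [Fintype κ]

theorem dotProduct_slowFastCoupling_mulVec (β w : ι → R) (b : κ → R) (y : ι × κ → R) :
    β ⬝ᵥ slowFastCoupling w b *ᵥ y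
      = ∑ p : ι × κ, (∑ j with p.1 < j, β j) * (w p.1 * b p.2) * y p := by
  rw [dotProduct_mulVec]
  simp only [dotProduct, vecMul_slowFastCoupling_apply]

theorem dotProduct_slowFastCoupling_mulVec_eq_sum_mul_sum (β w : ι → R) (b : κ → R)
    (y : ι × κ → R) :
    β ⬝ᵥ slowFastCoupling w b *ᵥ y
      = ∑ i, w i * (∑ j with i < j, β j) * ∑ ℓ, b ℓ * y (i, ℓ) := by
  rw [dotProduct_slowFastCoupling_mulVec, Fintype.sum_prod_type]
  refine Finset.sum_congr rfl fun i _ => ?_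
  rw [Finset.mul_sum]
  exact Finset.sum_congr rfl fun ℓ _ => by ring

end SlowFast

end GARK

open GARK

theorem stmt15_general {R ι κ τ : Type*} [CommSemiring R] [LT ι] [DecidableLT ι] [Fintype ι]
    [Fintype κ] [Fintype τ] (F : Matrix κ τ R) (b : κ → R) (ζ : τ → R)
    (hb : ∑ ℓ, b ℓ = 1) (hζ : b ᵥ* F = ζ)
    (As : Matrix ι ι R) (Γ : τ → Matrix ι ι R) (β w x : ι → R) :
    β ⬝ᵥ (slowFastCoupling w b * fastSlowCoupling As F Γ) *ᵥ x
      = ∑ i, w i * (∑ ℓ with i < ℓ, β ℓ) * ((As + ∑ k, ζ k • Γ k) *ᵥ x) i := by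
  simp only [← mulVec_mulVec, dotProduct_slowFastCoupling_mulVec_eq_sum_mul_sum,
    sum_mul_fastSlowCoupling_mulVec, hb, hζ, one_smul]

/-- Expansion used for the fourth-order MRI-GARK coupling condition
`d^{sT} 𝔄^{ss} c^s = 1/24`: with `b·1 = 1` and `b·(A·d^{∘k}) = ζ_k`,
`β^T·A^{sf}·A^{fs}·c^s
  = Σ_i Δc_i (Σ_{ℓ=i+1}^{s} β_ℓ)((A^s + Σ_k ζ_k Γ^k)·c^s)_i`,
where `(A^{sf})_{j,(i,ℓ)} = Δc_i b_ℓ` if `j ≥ i+1` and `0` otherwise, and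
`(A^{fs})_{(i,ℓ),j} = (A^s)_{i,j} + Σ_k (A·d^{∘k})_ℓ (Γ^k)_{i,j}`. -/
theorem stmt15 {m s K : ℕ} (A : Matrix (Fin m) (Fin m) ℝ) (b d : Fin m → ℝ)
    (ζ : Fin (K + 1) → ℝ)
    (hb1 : ∑ ℓ, b ℓ = 1)
    (hζ : ∀ k : Fin (K + 1), ∑ ℓ, b ℓ * (∑ r, A ℓ r * d r ^ (k : ℕ)) = ζ k)
    (As : Matrix (Fin s) (Fin s) ℝ) (Γ : Fin (K + 1) → Matrix (Fin s) (Fin s) ℝ)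
    (c : Fin (s + 1) → ℝ)
    (Δc : Fin s → ℝ) (hΔc : ∀ i, Δc i = c i.succ - c i.castSucc)
    (β : Fin s → ℝ) :
    ∑ p : Fin s × Fin m,
        (∑ j ∈ Finset.univ.filter (fun j : Fin s => p.1 < j), β j)
          * (Δc p.1 * b p.2)
          * ∑ j : Fin s, (As p.1 j
              + ∑ k : Fin (K + 1), (∑ r, A p.2 r * d r ^ (k : ℕ)) * Γ k p.1 j)
            * c j.castSucc
      = ∑ i : Fin s, Δc i
          * (∑ ℓ ∈ Finset.univ.filter (fun ℓ : Fin s => i < ℓ), β ℓ)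
          * ∑ j : Fin s, (As i j + ∑ k : Fin (K + 1), ζ k * Γ k i j)
              * c j.castSucc := by
  have h := stmt15_general (of fun ℓ (k : Fin (K + 1)) => ∑ r, A ℓ r * d r ^ (k : ℕ)) b ζ hb1
    (funext hζ) As Γ β Δc fun j => c j.castSucc
  rw [← mulVec_mulVec, dotProduct_slowFastCoupling_mulVec] at h
  simpa only [mulVec, dotProduct, fastSlowCoupling, of_apply, Matrix.add_apply, Matrix.sum_apply,
    Matrix.smul_apply, smul_eq_mul] using h
end

section
/- Let z^f, z^s, ξ ∈ ℂ with z^s ≠ 2, set w := −ξ(1−ξ)(z^f−z^s)², and for α ∈ ℂ, α ≠ 0, let M(α) be the 2×2 complex matrix with rows ( φ_0(z^f) + w·φ_2(z^f) , ((1−ξ)/α)(z^f−z^s)(φ_1(z^f) + z^f·φ_2(z^f)) ) and ( −αξ(z^f−z^s)/(2−z^s) , (2+z^s)/(2−z^s) ). Then M(α) = D(α)^{-1}·M(1)·D(α), where D(α) := diag(α, 1); consequently the characteristic polynomial (and hence the spectrum) of M(α) does not depend on α. (M(α) is the stability matrix of the implicit trapezoidal MRI-GARK scheme, and this proves its spectrum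 is independent of the scaling factor α.) -/
/-! Replacing `1` by `α` divides the upper right entry of the stability matrix by `α` and multiplies
the lower left one by `α`. Conjugation by `D(α)` has exactly this effect on a `2 × 2` matrix, so
`M(α)` and `M(1)` are similar. -/

open Matrix

section Conjugation

variable {n K : Type*} [Fintype n] [DecidableEq n] [Field K]

theorem isUnit_diagonal_of_forall_ne_zero {d : n → K} (hd : ∀ i, d i ≠ 0) :
    IsUnit (diagonal d) :=
  isUnit_diagonal.mpr <| Pi.isUnit_iff.mpr fun i => (hd i).isUnit

theorem inv_diagonal_of_forall_ne_zero {d : n → K} (hd : ∀ i, d i ≠ 0) :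
    (diagonal d)⁻¹ = diagonal d⁻¹ := by
  refine inv_eq_left_inv ?_
  rw [diagonal_mul_diagonal, ← diagonal_one]
  exact congrArg diagonal (funext fun i => inv_mul_cancel₀ (hd i))

theorem inv_diagonal_mul_mul_diagonal_apply {d : n → K} (hd : ∀ i, d i ≠ 0)
    (A : Matrix n n K) (i j : n) :
    ((diagonal d)⁻¹ * A * diagonal d) i j = (d i)⁻¹ * A i j * d j := by
  rw [inv_diagonal_of_forall_ne_zero hd, mul_diagonal, diagonal_mul, Pi.inv_apply]

theorem inv_diagonal_mul_mul_diagonal_fin_two {d : Fin 2 → K} (hd : ∀ i, d i ≠ 0)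
    (A : Matrix (Fin 2) (Fin 2) K) :
    (diagonal d)⁻¹ * A * diagonal d =
      !![A 0 0, A 0 1 * d 1 / d 0; A 1 0 * d 0 / d 1, A 1 1] := by
  have h₀ := hd 0
  have h₁ := hd 1
  rw [eta_fin_two ((diagonal d)⁻¹ * A * diagonal d)]
  simp only [inv_diagonal_mul_mul_diagonal_apply hd]
  congr! 4 <;> field_simp

end Conjugation

/-- `M(α)`, the stability matrix of the implicit trapezoidal MRI-GARK scheme,
satisfies `M(α) = D(α)⁻¹·M(1)·D(α)` with `D(α) = diag(α,1)`; consequently its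
characteristic polynomial (hence its spectrum) does not depend on `α`. -/
theorem stmt18 (zf zs ξ : ℂ) (hzs : zs ≠ 2) (α : ℂ) (hα : α ≠ 0) :
    let w : ℂ := -ξ * (1 - ξ) * (zf - zs) ^ 2
    let M : ℂ → Matrix (Fin 2) (Fin 2) ℂ := fun a =>
      !![phi 0 zf + w * phi 2 zf,
         ((1 - ξ) / a) * (zf - zs) * (phi 1 zf + zf * phi 2 zf);
         -a * ξ * (zf - zs) / (2 - zs), (2 + zs) / (2 - zs)]
    let D : ℂ → Matrix (Fin 2) (Fin 2) ℂ := fun a => !![a, 0; 0, 1]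
    M α = (D α)⁻¹ * M 1 * D α ∧ (M α).charpoly = (M 1).charpoly := by
  intro w M D
  have hD : D α = diagonal ![α, 1] := (diagonal_vec2 α 1).symm
  have hd : ∀ i, ![α, 1] i ≠ 0 := Fin.forall_fin_two.mpr ⟨hα, one_ne_zero⟩
  have upper_right : M α 0 1 = M 1 0 1 * 1 / α := by
    change (1 - ξ) / α * _ * _ = (1 - ξ) / 1 * _ * _ * 1 / α
    ring
  have lower_left : M α 1 0 = M 1 1 0 * α / 1 := by
    change -α * ξ * _ / _ = -1 * ξ * _ / _ * α / 1
    ring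
  have similar : M α = (D α)⁻¹ * M 1 * D α := calc
    M α = !![M 1 0 0, M α 0 1; M α 1 0, M 1 1 1] := rfl
    _ = !![M 1 0 0, M 1 0 1 * 1 / α; M 1 1 0 * α / 1, M 1 1 1] := by
      rw [upper_right, lower_left]
    _ = (D α)⁻¹ * M 1 * D α := by
      rw [hD]
      exact (inv_diagonal_mul_mul_diagonal_fin_two hd (M 1)).symm
  have hunit : IsUnit (D α) := hD ▸ isUnit_diagonal_of_forall_ne_zero hd
  exact ⟨similar, similar ▸ charpoly_units_conj' hunit.unit (M 1)⟩
end
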